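/- Let r ≥ 3, let H be a T_r-free r-graph with δ⁺_{r-1}(H) ≥ r, and let e = {u_1,…,u_r} ∈ H be an edge. Then for every i ∈ [r], the set N_H(e \ {u_i}) is independent in H, i.e. every edge of H contains at most one vertex of N_H(e \ {u_i}). -/

import Mathlib

variable {V : Type*} [Fintype V] [DecidableEq V]

/-- The (r-1)-shadow of an r-graph: all (r-1)-sets contained in some edge. -/
def sshadow (r : ℕ) (H : Finset (Finset V)) : Finset (Finset V) :=
  Finset.univ.filter (fun e => e.card = r - 1 ∧ ∃ E ∈ H, e ⊆ E)

/-- The codegree neighborhood of a set `e`: vertices `v` with `e ∪ {v} ∈ H`. -/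
def nbhd (H : Finset (Finset V)) (e : Finset V) : Finset V :=
  Finset.univ.filter (fun v => insert v e ∈ H)

/-- The neighborhood of a vertex. -/
def vnbhd (H : Finset (Finset V)) (v : V) : Finset V :=
  Finset.univ.filter (fun u => u ≠ v ∧ ∃ E ∈ H, u ∈ E ∧ v ∈ E)

/-- `H` is T_r-free. -/
def IsTrFree (r : ℕ) (H : Finset (Finset V)) : Prop :=
  ¬ ∃ (S W : Finset V) (a b : V),
      S.card = r - 1 ∧ W.card = r - 2 ∧ a ≠ b ∧
      a ∉ S ∧ b ∉ S ∧ a ∉ W ∧ b ∉ W ∧ Disjoint S W ∧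
      insert a S ∈ H ∧ insert b S ∈ H ∧ insert a (insert b W) ∈ H

/-- A set of vertices is independent. -/
def IsIndep (H : Finset (Finset V)) (I : Finset V) : Prop :=
  ∀ E ∈ H, (E ∩ I).card ≤ 1

/-- `H` is r-partite. -/
def IsRPartite (r : ℕ) (H : Finset (Finset V)) : Prop :=
  ∃ P : Fin r → Finset V, (∀ v : V, ∃! i, v ∈ P i) ∧ ∀ i, IsIndep H (P i)

/-- Minimum positive codegree. -/
noncomputable def minPosCodeg (r : ℕ) (H : Finset (Finset V)) : ℕ :=
  sInf {k | ∃ e ∈ sshadow r H, (nbhd H e).card = k}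

/-!
Suppose an edge `E` contains two vertices `a ≠ b` of `N_H(S)`, where `|S| = r - 1`. Positive
codegree at least `r > |S|` lets us replace the vertices of `E ∩ S` one at a time by vertices
outside `S`, without touching `a` and `b`. The resulting edge is disjoint from `S`, so together
with `S ∪ {a}` and `S ∪ {b}` it forms a copy of `T_r`.
-/

variable {r : ℕ} {H : Finset (Finset V)} {E S : Finset V} {a b w : V}

theorem mem_nbhd : a ∈ nbhd H S ↔ insert a S ∈ H := by
  simp only [nbhd, Finset.mem_filter_univ]

theorem notMem_of_mem_nbhd (hH : ∀ E ∈ H, E.card = r) (hS : S.card < r) (ha : a ∈ nbhd H S) :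
    a ∉ S := by
  intro haS
  have hSH : S ∈ H := Finset.insert_eq_of_mem haS ▸ mem_nbhd.mp ha
  exact hS.ne (hH S hSH)

theorem erase_mem_sshadow (hE : E ∈ H) (hEr : E.card = r) (hw : w ∈ E) :
    E.erase w ∈ sshadow r H := by
  rw [sshadow, Finset.mem_filter_univ, Finset.card_erase_of_mem hw, hEr]
  exact ⟨rfl, E, hE, Finset.erase_subset w E⟩

theorem exists_notMem_insert_erase_mem (hdeg : ∀ e ∈ sshadow r H, r ≤ (nbhd H e).card)
    (hE : E ∈ H) (hEr : E.card = r) (hS : S.card < r) (hw : w ∈ E) :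
    ∃ x ∉ S, insert x (E.erase w) ∈ H := by
  have hcard : S.card < (nbhd H (E.erase w)).card :=
    hS.trans_le (hdeg _ (erase_mem_sshadow hE hEr hw))
  obtain ⟨x, hx, hxS⟩ := Finset.exists_mem_notMem_of_card_lt_card hcard
  exact ⟨x, hxS, mem_nbhd.mp hx⟩

theorem exists_mem_disjoint_of_sdiff_subset (hH : ∀ E ∈ H, E.card = r)
    (hdeg : ∀ e ∈ sshadow r H, r ≤ (nbhd H e).card) (hS : S.card < r) (hE : E ∈ H) :
    ∃ F ∈ H, E \ S ⊆ F ∧ Disjoint F S := by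
  induction hn : (E ∩ S).card generalizing E with
  | zero =>
    exact ⟨E, hE, Finset.sdiff_subset,
      Finset.disjoint_iff_inter_eq_empty.mpr (Finset.card_eq_zero.mp hn)⟩
  | succ n ih =>
    obtain ⟨w, hw⟩ : (E ∩ S).Nonempty := Finset.card_pos.mp (by lia)
    obtain ⟨hwE, hwS⟩ := Finset.mem_inter.mp hw
    obtain ⟨x, hxS, hE'⟩ := exists_notMem_insert_erase_mem hdeg hE (hH E hE) hS hwE
    have hinter : (insert x (E.erase w) ∩ S).card = n := by
      rw [Finset.insert_inter_of_notMem hxS, Finset.erase_inter, Finset.card_erase_of_mem hw, hn,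
        Nat.add_sub_cancel]
    have hsdiff : E \ S ⊆ insert x (E.erase w) \ S := by
      grind
    obtain ⟨F, hF, hsub, hdisj⟩ := ih hE' hinter
    exact ⟨F, hF, hsdiff.trans hsub, hdisj⟩

theorem IsTrFree.not_disjoint_of_mem_nbhd (hfree : IsTrFree r H) (hH : ∀ E ∈ H, E.card = r)
    (hab : a ≠ b) (ha : a ∈ nbhd H S) (hb : b ∈ nbhd H S) (hE : E ∈ H) (haE : a ∈ E)
    (hbE : b ∈ E) : ¬ Disjoint E S := by
  intro hdisj
  have haS : a ∉ S := Finset.disjoint_left.mp hdisj haE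
  have hbS : b ∉ S := Finset.disjoint_left.mp hdisj hbE
  have hbE' : b ∈ E.erase a := Finset.mem_erase.mpr ⟨hab.symm, hbE⟩
  rw [mem_nbhd] at ha hb
  have hS : S.card = r - 1 := by
    rw [← hH _ ha, Finset.card_insert_of_notMem haS, Nat.add_sub_cancel]
  have hW : ((E.erase a).erase b).card = r - 2 := by
    rw [Finset.card_erase_of_mem hbE', Finset.card_erase_of_mem haE, hH E hE, Nat.sub_sub]
  have hSW : Disjoint S ((E.erase a).erase b) :=
    hdisj.symm.mono_right ((Finset.erase_subset _ _).trans (Finset.erase_subset _ _))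
  have hEW : insert a (insert b ((E.erase a).erase b)) = E := by
    rw [Finset.insert_erase hbE', Finset.insert_erase haE]
  exact hfree ⟨S, (E.erase a).erase b, a, b, hS, hW, hab, haS, hbS, by simp, by simp, hSW, ha, hb,
    hEW.symm ▸ hE⟩

theorem stmt5_general (hH : ∀ E ∈ H, E.card = r) (hfree : IsTrFree r H)
    (hdeg : ∀ e ∈ sshadow r H, r ≤ (nbhd H e).card) (hS : S.card < r) :
    IsIndep H (nbhd H S) := by
  intro E hE
  rw [Finset.card_le_one]
  intro a ha b hb
  obtain ⟨haE, haN⟩ := Finset.mem_inter.mp ha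
  obtain ⟨hbE, hbN⟩ := Finset.mem_inter.mp hb
  obtain ⟨F, hF, hsub, hdisj⟩ := exists_mem_disjoint_of_sdiff_subset hH hdeg hS hE
  have haF : a ∈ F := hsub (Finset.mem_sdiff.mpr ⟨haE, notMem_of_mem_nbhd hH hS haN⟩)
  have hbF : b ∈ F := hsub (Finset.mem_sdiff.mpr ⟨hbE, notMem_of_mem_nbhd hH hS hbN⟩)
  by_contra hab
  exact hfree.not_disjoint_of_mem_nbhd hH hab haN hbN hF haF hbF hdisj

/-- Let `H` be a `T_r`-free `r`-graph with minimum positive codegree at least `r`, and let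
`e ∈ H` be an edge. Then for every `u ∈ e`, the set `N_H(e \\ {u})` is independent in `H`. -/
theorem stmt5 {V : Type*} [Fintype V] [DecidableEq V] {r : ℕ} (hr : 3 ≤ r)
    {H : Finset (Finset V)} (hH : ∀ E ∈ H, E.card = r)
    (hfree : IsTrFree r H)
    (hdeg : ∀ e ∈ sshadow r H, r ≤ (nbhd H e).card)
    {e : Finset V} (he : e ∈ H) :
    ∀ u ∈ e, IsIndep H (nbhd H (e.erase u)) :=
  fun _ hu ↦ stmt5_general hH hfree hdeg (hH e he ▸ Finset.card_erase_lt_of_mem hu)
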